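/- arXiv:2109.02756 — 2 statements merged into one kernel-verified Lean document; each statement's English description precedes it below -/
import Mathlib

section
/- Let D ⊆ ℝⁿ be a nonempty closed convex set and let {y^j} be a sequence in ℝⁿ such that lim_{j→∞} y^j / j = ȳ for some ȳ ∈ ℝⁿ. Then lim_{j→∞} (y^j − π_D[y^j]) / j = π_{(rec D)°}[ȳ], the projection of ȳ onto the polar cone of the recession cone of D. -/
open scoped RealInnerProductSpace
open Filter Topology Metric ContinuousLinearMap

/-- Projection onto a set: the unique nearest point, when it exists
(it exists and is unique for nonempty closed convex sets in Euclidean space). -/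
noncomputable def proj {E : Type*} [NormedAddCommGroup E] [InnerProductSpace ℝ E]
    (S : Set E) (x : E) : E :=
  open Classical in
  if h : ∃ y, y ∈ S ∧ ∀ z ∈ S, ‖x - y‖ ≤ ‖x - z‖ then h.choose else 0

/-- The polar cone `K° = {w | ⟪w, y⟫ ≤ 0 for all y ∈ K}`. -/
def polarCone {E : Type*} [NormedAddCommGroup E] [InnerProductSpace ℝ E]
    (K : Set E) : Set E := {w | ∀ y ∈ K, ⟪w, y⟫ ≤ 0}

/-- The recession cone `rec D = {y | y + z ∈ D for all z ∈ D}`. -/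
def recCone {E : Type*} [NormedAddCommGroup E] (D : Set E) : Set E :=
  {y | ∀ z ∈ D, y + z ∈ D}

/-- The normal cone of `D` at `z`: `N_D(z) = {y | ⟪y, z' - z⟫ ≤ 0 for all z' ∈ D}`. -/
def normalCone {E : Type*} [NormedAddCommGroup E] [InnerProductSpace ℝ E]
    (D : Set E) (z : E) : Set E := {y | ∀ z' ∈ D, ⟪y, z' - z⟫ ≤ 0}

/-!
The sets `{w | z + t • w ∈ D}` with `z ∈ D` shrink, as `t` grows, to the recession cone of `D`.
Projections onto a decreasing family of closed convex sets converge in norm, because the distances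
to `x` are monotone and bounded and their increments control the squared displacements of the
projections. Rescaling, this says `t⁻¹ • π_D[z + t • x] → π_{rec D}[x]`; as projections are
nonexpansive, `z + t • x` may be replaced by any `y` with `t⁻¹ • y → x`. Moreau's decomposition
`x - π_K[x] = π_{K°}[x]` for the cone `K = rec D` then gives the claim, in any Hilbert space.
-/

section Projection

variable {E : Type*} [NormedAddCommGroup E] [InnerProductSpace ℝ E] {S : Set E}

theorem norm_sub_sq_add_norm_sub_sq_le_of_inner_nonpos {x v w : E} (h : ⟪x - w, v - w⟫ ≤ 0) :
    ‖x - w‖ ^ 2 + ‖v - w‖ ^ 2 ≤ ‖x - v‖ ^ 2 := by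
  rw [← sub_sub_sub_cancel_right x v w, norm_sub_sq_real (x - w) (v - w)]
  linarith

theorem proj_eq_of_inner_nonpos {x w : E} (hw : w ∈ S) (h : ∀ v ∈ S, ⟪x - w, v - w⟫ ≤ 0) :
    proj S x = w := by
  have pythagoras (v : E) (hv : v ∈ S) : ‖x - w‖ ^ 2 + ‖v - w‖ ^ 2 ≤ ‖x - v‖ ^ 2 :=
    norm_sub_sq_add_norm_sub_sq_le_of_inner_nonpos (h v hv)
  have exists_nearest : ∃ y, y ∈ S ∧ ∀ z ∈ S, ‖x - y‖ ≤ ‖x - z‖ :=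
    ⟨w, hw, fun z hz => le_of_sq_le_sq
      ((le_add_of_nonneg_right (sq_nonneg _)).trans (pythagoras z hz)) (norm_nonneg _)⟩
  rw [_root_.proj, dif_pos exists_nearest]
  obtain ⟨nearest_mem, nearest_le⟩ := exists_nearest.choose_spec
  have sq_le := pow_le_pow_left₀ (norm_nonneg _) (nearest_le w hw) 2
  have sq_eq_zero : ‖exists_nearest.choose - w‖ ^ 2 = 0 :=
    le_antisymm (by linarith [pythagoras _ nearest_mem]) (sq_nonneg _)
  exact sub_eq_zero.1 (norm_eq_zero.1 (pow_eq_zero_iff two_ne_zero |>.1 sq_eq_zero))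

variable [CompleteSpace E]

theorem proj_mem_and_inner_nonpos (hne : S.Nonempty) (hcl : IsClosed S) (hconv : Convex ℝ S)
    (x : E) : proj S x ∈ S ∧ ∀ v ∈ S, ⟪x - proj S x, v - proj S x⟫ ≤ 0 := by
  obtain ⟨w, hw, hmin⟩ := exists_norm_eq_iInf_of_complete_convex hne hcl.isComplete hconv x
  have obtuse := (norm_eq_iInf_iff_real_inner_le_zero hconv hw).1 hmin
  rw [proj_eq_of_inner_nonpos hw obtuse]
  exact ⟨hw, obtuse⟩

theorem proj_mem (hne : S.Nonempty) (hcl : IsClosed S) (hconv : Convex ℝ S) (x : E) :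
    proj S x ∈ S :=
  (proj_mem_and_inner_nonpos hne hcl hconv x).1

theorem inner_sub_proj_nonpos (hcl : IsClosed S) (hconv : Convex ℝ S) (x : E) {v : E}
    (hv : v ∈ S) : ⟪x - proj S x, v - proj S x⟫ ≤ 0 :=
  (proj_mem_and_inner_nonpos ⟨v, hv⟩ hcl hconv x).2 v hv

theorem norm_sub_proj_sq_add_norm_sub_proj_sq_le (hcl : IsClosed S) (hconv : Convex ℝ S) (x : E)
    {v : E} (hv : v ∈ S) : ‖x - proj S x‖ ^ 2 + ‖v - proj S x‖ ^ 2 ≤ ‖x - v‖ ^ 2 :=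
  norm_sub_sq_add_norm_sub_sq_le_of_inner_nonpos (inner_sub_proj_nonpos hcl hconv x hv)

theorem norm_proj_sub_proj_le (hne : S.Nonempty) (hcl : IsClosed S) (hconv : Convex ℝ S)
    (x y : E) : ‖proj S x - proj S y‖ ≤ ‖x - y‖ := by
  have at_x := inner_sub_proj_nonpos hcl hconv x (proj_mem hne hcl hconv y)
  have at_y := inner_sub_proj_nonpos hcl hconv y (proj_mem hne hcl hconv x)
  set p := proj S x
  set q := proj S y
  have sum_eq : ⟪x - p, q - p⟫ + ⟪y - q, p - q⟫ = ‖p - q‖ ^ 2 - ⟪x - y, p - q⟫ := by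
    rw [← neg_sub p q, inner_neg_right, ← real_inner_self_eq_norm_sq, ← sub_eq_zero]
    simp only [inner_sub_left]
    ring
  have sq_le : ‖p - q‖ * ‖p - q‖ ≤ ‖x - y‖ * ‖p - q‖ := by
    linarith [real_inner_le_norm (x - y) (p - q), sq ‖p - q‖]
  rcases (norm_nonneg (p - q)).eq_or_lt with h | h
  · exact h ▸ norm_nonneg _
  · exact le_of_mul_le_mul_right sq_le h

/-- Moreau's decomposition: a closed convex set that contains `0` and is closed under addition is a
cone. -/
theorem proj_polarCone (hcl : IsClosed S) (hconv : Convex ℝ S) (zero_mem : 0 ∈ S)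
    (add_mem : ∀ v ∈ S, ∀ w ∈ S, v + w ∈ S) (x : E) :
    proj (polarCone S) x = x - proj S x := by
  have hp : proj S x ∈ S := proj_mem ⟨0, zero_mem⟩ hcl hconv x
  have obtuse (v : E) (hv : v ∈ S) : ⟪x - proj S x, v - proj S x⟫ ≤ 0 :=
    inner_sub_proj_nonpos hcl hconv x hv
  have residual_mem : x - proj S x ∈ polarCone S := fun v hv => by
    simpa only [add_sub_cancel_right] using obtuse _ (add_mem v hv _ hp)
  have inner_residual_nonneg : 0 ≤ ⟪x - proj S x, proj S x⟫ := by
    simpa only [zero_sub, inner_neg_right, neg_nonpos] using obtuse 0 zero_mem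
  refine proj_eq_of_inner_nonpos residual_mem fun v hv => ?_
  rw [sub_sub_cancel, inner_sub_right, real_inner_comm v, real_inner_comm (x - proj S x)]
  linarith [hv _ hp]

end Projection

section DecreasingSets

variable {E : Type*} [NormedAddCommGroup E] [InnerProductSpace ℝ E] [CompleteSpace E]
  {ι : Type*} [SemilatticeSup ι] [Nonempty ι] {C : ι → Set E}

theorem cauchySeq_proj_of_antitone (hC : Antitone C) (hcl : ∀ i, IsClosed (C i))
    (hconv : ∀ i, Convex ℝ (C i)) (hne : (⋂ i, C i).Nonempty) (x : E) :
    CauchySeq fun i => proj (C i) x := by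
  obtain ⟨z, hz⟩ := hne
  have z_mem (i : ι) : z ∈ C i := Set.mem_iInter.1 hz i
  have pythagoras {i : ι} {v : E} (hv : v ∈ C i) :
      ‖x - proj (C i) x‖ ^ 2 + ‖v - proj (C i) x‖ ^ 2 ≤ ‖x - v‖ ^ 2 :=
    norm_sub_proj_sq_add_norm_sub_proj_sq_le (hcl i) (hconv i) x hv
  have proj_mem_of_le {i j : ι} (hij : i ≤ j) : proj (C j) x ∈ C i :=
    hC hij (proj_mem ⟨z, z_mem j⟩ (hcl j) (hconv j) x)
  have dist_mono : Monotone fun i => ‖x - proj (C i) x‖ ^ 2 := fun i j hij =>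
    (le_add_of_nonneg_right (sq_nonneg _)).trans (pythagoras (proj_mem_of_le hij))
  have dist_bdd : BddAbove (Set.range fun i => ‖x - proj (C i) x‖ ^ 2) :=
    ⟨‖x - z‖ ^ 2, Set.forall_mem_range.2 fun i =>
      (le_add_of_nonneg_right (sq_nonneg _)).trans (pythagoras (z_mem i))⟩
  have dist_cauchy := (tendsto_atTop_ciSup dist_mono dist_bdd).cauchySeq
  refine Metric.cauchySeq_iff'.2 fun ε hε => ?_
  obtain ⟨N, hN⟩ := Metric.cauchySeq_iff'.1 dist_cauchy (ε ^ 2) (by positivity)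
  refine ⟨N, fun n hn => ?_⟩
  rw [dist_eq_norm]
  refine lt_of_pow_lt_pow_left₀ 2 hε.le ?_
  linarith [pythagoras (proj_mem_of_le hn), (abs_lt.1 (Real.dist_eq _ _ ▸ hN n hn)).2]

theorem tendsto_proj_iInter_of_antitone (hC : Antitone C) (hcl : ∀ i, IsClosed (C i))
    (hconv : ∀ i, Convex ℝ (C i)) (hne : (⋂ i, C i).Nonempty) (x : E) :
    Tendsto (fun i => proj (C i) x) atTop (𝓝 (proj (⋂ i, C i) x)) := by
  obtain ⟨q, hq⟩ := cauchySeq_tendsto_of_complete (cauchySeq_proj_of_antitone hC hcl hconv hne x)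
  have q_mem : q ∈ ⋂ i, C i := Set.mem_iInter.2 fun i => (hcl i).mem_of_tendsto hq <| by
    filter_upwards [eventually_ge_atTop i] with j hij
    exact hC hij (proj_mem (hne.mono (Set.iInter_subset C j)) (hcl j) (hconv j) x)
  have obtuse (v : E) (hv : v ∈ ⋂ i, C i) : ⟪x - q, v - q⟫ ≤ 0 :=
    le_of_tendsto ((hq.const_sub x).inner (hq.const_sub v)) <| Eventually.of_forall fun i =>
      inner_sub_proj_nonpos (hcl i) (hconv i) x (Set.mem_iInter.1 hv i)
  rwa [proj_eq_of_inner_nonpos q_mem obtuse]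

end DecreasingSets

section RecessionCone

variable {E : Type*} [NormedAddCommGroup E] {D : Set E}

theorem zero_mem_recCone (D : Set E) : (0 : E) ∈ recCone D := fun z hz => by
  rwa [zero_add]

theorem add_mem_recCone {v w : E} (hv : v ∈ recCone D) (hw : w ∈ recCone D) :
    v + w ∈ recCone D := fun z hz => by
  rw [add_assoc]
  exact hv _ (hw z hz)

theorem nsmul_mem_recCone {v : E} (hv : v ∈ recCone D) (n : ℕ) : n • v ∈ recCone D := by
  induction n with
  | zero => simpa only [zero_smul] using zero_mem_recCone D
  | succ n ih => simpa only [succ_nsmul] using add_mem_recCone ih hv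

theorem recCone_eq_iInter (D : Set E) : recCone D = ⋂ z ∈ D, (· + z) ⁻¹' D := by
  ext v
  simp only [recCone, Set.mem_ofPred_eq, Set.mem_iInter, Set.mem_preimage]

theorem isClosed_recCone (hcl : IsClosed D) : IsClosed (recCone D) := by
  rw [recCone_eq_iInter]
  exact isClosed_biInter fun z _ => hcl.preimage (continuous_add_const z)

variable [NormedSpace ℝ E]

theorem convex_recCone (hconv : Convex ℝ D) : Convex ℝ (recCone D) := by
  rw [recCone_eq_iInter]
  exact convex_iInter₂ fun z _ => hconv.translate_preimage_left z

theorem smul_mem_recCone (hconv : Convex ℝ D) {v : E} (hv : v ∈ recCone D) {t : ℝ}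
    (ht : 0 ≤ t) : t • v ∈ recCone D := by
  obtain ⟨n, hn⟩ := exists_nat_gt t
  have n_pos : (0 : ℝ) < n := ht.trans_lt hn
  have fraction_mem : (t / n) • v ∈ recCone D :=
    (convex_recCone hconv).smul_mem_of_zero_mem (zero_mem_recCone D) hv
      ⟨by positivity, (div_le_one n_pos).2 hn.le⟩
  have smul_eq : t • v = n • (t / n) • v := by
    rw [← Nat.cast_smul_eq_nsmul ℝ, smul_smul, mul_div_cancel₀ _ n_pos.ne']
  exact smul_eq ▸ nsmul_mem_recCone fraction_mem n

end RecessionCone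

theorem tendsto_inv_smul_nhds_zero {E ι : Type*} [NormedAddCommGroup E] [NormedSpace ℝ E]
    {l : Filter ι} {t : ι → ℝ} (ht : Tendsto t l atTop) (z : E) :
    Tendsto (fun i => (t i)⁻¹ • z) l (𝓝 0) :=
  zero_smul ℝ z ▸ ht.inv_tendsto_atTop.smul_const z

section BlowDown

/-- The blow-down `t⁻¹ • (D - z)` of `D` about `z` by the factor `t`, whose limit as `t → ∞` is the
recession cone. It is encoded as a preimage, so that at `t = 0` it is all of `E` when `z ∈ D`. -/
def blowDown {E : Type*} [NormedAddCommGroup E] [NormedSpace ℝ E] (D : Set E) (z : E) (t : ℝ) :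
    Set E :=
  {w | z + t • w ∈ D}

section NormedSpace

variable {E : Type*} [NormedAddCommGroup E] [NormedSpace ℝ E] {D : Set E} {z : E}

theorem isClosed_blowDown (hcl : IsClosed D) (z : E) (t : ℝ) : IsClosed (blowDown D z t) :=
  hcl.preimage (by fun_prop : Continuous fun w : E => z + t • w)

theorem convex_blowDown (hconv : Convex ℝ D) (z : E) (t : ℝ) : Convex ℝ (blowDown D z t) :=
  (hconv.translate_preimage_right z).smul_preimage t

theorem blowDown_subset_of_le (hconv : Convex ℝ D) (hz : z ∈ D) {s t : ℝ} (hs : 0 ≤ s)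
    (hst : s ≤ t) : blowDown D z t ⊆ blowDown D z s := fun w hw => by
  rcases hs.eq_or_lt with rfl | s_pos
  · simpa only [blowDown, Set.mem_ofPred_eq, zero_smul, add_zero] using hz
  have t_pos : 0 < t := s_pos.trans_le hst
  have on_segment := hconv.add_smul_mem hz hw ⟨by positivity, (div_le_one t_pos).2 hst⟩
  rwa [smul_smul, div_mul_cancel₀ _ t_pos.ne'] at on_segment

theorem mem_recCone_of_forall_mem_blowDown (hcl : IsClosed D) (hconv : Convex ℝ D) {v : E}
    (hv : ∀ t : ℝ, 0 < t → v ∈ blowDown D z t) : v ∈ recCone D := fun w hw => by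
  have tendsto_segment :
      Tendsto (fun ε : ℝ => (1 - ε) • w + (ε • z + v)) (𝓝[>] 0) (𝓝 (v + w)) := by
    refine Tendsto.mono_left (Continuous.tendsto' (by fun_prop) _ _ ?_) nhdsWithin_le_nhds
    rw [sub_zero, one_smul, zero_smul, zero_add, add_comm]
  refine hcl.mem_of_tendsto tendsto_segment ?_
  filter_upwards [Ioo_mem_nhdsGT zero_lt_one] with ε ⟨ε_pos, ε_lt_one⟩
  have far_mem : z + ε⁻¹ • v ∈ D := hv ε⁻¹ (inv_pos.2 ε_pos)
  have segment_mem := hconv hw far_mem (sub_nonneg.2 ε_lt_one.le) ε_pos.le (sub_add_cancel 1 ε)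
  rwa [smul_add, smul_inv_smul₀ ε_pos.ne'] at segment_mem

theorem iInter_blowDown (hcl : IsClosed D) (hconv : Convex ℝ D) (hz : z ∈ D) :
    ⋂ t : NNReal, blowDown D z t = recCone D := by
  refine Set.Subset.antisymm (fun v hv => ?_) (fun v hv => Set.mem_iInter.2 fun t => ?_)
  · exact mem_recCone_of_forall_mem_blowDown hcl hconv fun t ht =>
      Set.mem_iInter.1 hv ⟨t, ht.le⟩
  · have translate_mem := smul_mem_recCone hconv hv t.coe_nonneg z hz
    rwa [add_comm] at translate_mem

end NormedSpace

variable {E : Type*} [NormedAddCommGroup E] [InnerProductSpace ℝ E] [CompleteSpace E]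
  {D : Set E} {z : E}

theorem proj_blowDown (hne : D.Nonempty) (hcl : IsClosed D) (hconv : Convex ℝ D) (z x : E)
    {t : ℝ} (ht : t ≠ 0) : proj (blowDown D z t) x = t⁻¹ • (proj D (z + t • x) - z) := by
  refine proj_eq_of_inner_nonpos ?_ fun v hv => ?_
  · rw [blowDown, Set.mem_ofPred_eq, smul_inv_smul₀ ht, add_sub_cancel]
    exact proj_mem hne hcl hconv _
  · set p := proj D (z + t • x)
    have rescale (w : E) : w - t⁻¹ • (p - z) = t⁻¹ • (z + t • w - p) := by
      simp only [smul_sub, smul_add, inv_smul_smul₀ ht]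
      abel
    rw [rescale, rescale, real_inner_smul_left, real_inner_smul_right, ← mul_assoc]
    exact mul_nonpos_of_nonneg_of_nonpos (mul_self_nonneg _) (inner_sub_proj_nonpos hcl hconv _ hv)

theorem tendsto_proj_blowDown (hcl : IsClosed D) (hconv : Convex ℝ D) (hz : z ∈ D) (x : E) :
    Tendsto (fun t : ℝ => proj (blowDown D z t) x) atTop (𝓝 (proj (recCone D) x)) := by
  have anti : Antitone fun t : NNReal => blowDown D z t := fun s _ hst =>
    blowDown_subset_of_le hconv hz s.coe_nonneg hst
  have inter_eq := iInter_blowDown hcl hconv hz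
  have tendsto_nnreal := tendsto_proj_iInter_of_antitone anti (fun t => isClosed_blowDown hcl z t)
    (fun t => convex_blowDown hconv z t) (inter_eq ▸ ⟨0, zero_mem_recCone D⟩) x
  rw [inter_eq] at tendsto_nnreal
  refine (tendsto_nnreal.comp tendsto_real_toNNReal_atTop).congr' ?_
  filter_upwards [eventually_ge_atTop 0] with t ht
  rw [Function.comp_apply, Real.coe_toNNReal t ht]

theorem tendsto_inv_smul_proj_add_smul (hcl : IsClosed D) (hconv : Convex ℝ D) (hz : z ∈ D)
    (x : E) :
    Tendsto (fun t : ℝ => t⁻¹ • proj D (z + t • x)) atTop (𝓝 (proj (recCone D) x)) := by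
  have sum_tendsto := (tendsto_proj_blowDown hcl hconv hz x).add
    (tendsto_inv_smul_nhds_zero tendsto_id z)
  rw [add_zero] at sum_tendsto
  refine sum_tendsto.congr' ?_
  filter_upwards [eventually_ne_atTop 0] with t ht
  rw [proj_blowDown ⟨z, hz⟩ hcl hconv z x ht, smul_sub, id_eq, sub_add_cancel]

end BlowDown

section Asymptotics

variable {E : Type*} [NormedAddCommGroup E] [InnerProductSpace ℝ E] [CompleteSpace E]
  {D : Set E} {ι : Type*} {l : Filter ι} {t : ι → ℝ} {y : ι → E} {x : E}

theorem tendsto_inv_smul_proj (hne : D.Nonempty) (hcl : IsClosed D) (hconv : Convex ℝ D)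
    (ht : Tendsto t l atTop) (hy : Tendsto (fun i => (t i)⁻¹ • y i) l (𝓝 x)) :
    Tendsto (fun i => (t i)⁻¹ • proj D (y i)) l (𝓝 (proj (recCone D) x)) := by
  obtain ⟨z, hz⟩ := hne
  have along_ray :
      Tendsto (fun i => (t i)⁻¹ • proj D (z + t i • x)) l (𝓝 (proj (recCone D) x)) :=
    (tendsto_inv_smul_proj_add_smul hcl hconv hz x).comp ht
  have deviation : Tendsto (fun i => ‖(t i)⁻¹ • y i - ((t i)⁻¹ • z + x)‖) l (𝓝 0) := by
    simpa only [zero_add, sub_self, norm_zero] using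
      (hy.sub ((tendsto_inv_smul_nhds_zero ht z).add_const x)).norm
  refine along_ray.congr_dist <|
    squeeze_zero' (Eventually.of_forall fun _ => dist_nonneg) ?_ deviation
  filter_upwards [ht.eventually_ne_atTop 0] with i hi
  calc dist ((t i)⁻¹ • proj D (z + t i • x)) ((t i)⁻¹ • proj D (y i))
      = ‖(t i)⁻¹‖ * ‖proj D (y i) - proj D (z + t i • x)‖ := by
        rw [dist_comm, dist_eq_norm, ← smul_sub, norm_smul]
    _ ≤ ‖(t i)⁻¹‖ * ‖y i - (z + t i • x)‖ := by
        gcongr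
        exact norm_proj_sub_proj_le ⟨z, hz⟩ hcl hconv _ _
    _ = ‖(t i)⁻¹ • y i - ((t i)⁻¹ • z + x)‖ := by
        rw [← norm_smul, smul_sub, smul_add, inv_smul_smul₀ hi]

theorem stmt10_general (hne : D.Nonempty) (hcl : IsClosed D) (hconv : Convex ℝ D)
    (ht : Tendsto t l atTop) (hy : Tendsto (fun i => (t i)⁻¹ • y i) l (𝓝 x)) :
    Tendsto (fun i => (t i)⁻¹ • (y i - proj D (y i))) l (𝓝 (proj (polarCone (recCone D)) x)) := by
  rw [proj_polarCone (isClosed_recCone hcl) (convex_recCone hconv) (zero_mem_recCone D)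
    (fun _ hv _ hw => add_mem_recCone hv hw)]
  simpa only [smul_sub] using hy.sub (tendsto_inv_smul_proj hne hcl hconv ht hy)

end Asymptotics

/-- if `y^j / j → ȳ`, then `(y^j - π_D[y^j])/j → π_{(rec D)°}[ȳ]`. -/
theorem stmt10 {n : ℕ} (D : Set (EuclideanSpace ℝ (Fin n)))
    (hDne : D.Nonempty) (hDcl : IsClosed D) (hDconv : Convex ℝ D)
    (y : ℕ → EuclideanSpace ℝ (Fin n)) (ybar : EuclideanSpace ℝ (Fin n))
    (hy : Tendsto (fun j : ℕ => (j : ℝ)⁻¹ • y j) atTop (𝓝 ybar)) :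
    Tendsto (fun j : ℕ => (j : ℝ)⁻¹ • (y j - proj D (y j))) atTop
      (𝓝 (proj (polarCone (recCone D)) ybar)) :=
  stmt10_general hDne hDcl hDconv tendsto_natCast_atTop_atTop hy
end

section
/- Let P ∈ ℝ^{n×n} be symmetric positive semidefinite, q ∈ ℝⁿ, H ∈ ℝ^{m×n}, g ∈ ℝᵐ, D ⊆ ℝⁿ nonempty closed convex, K ⊆ ℝᵐ a nonempty closed convex cone with polar cone K°, and α > 0. Let {w^j, z^j, v^j} be generated by the PIPG iteration: w^{j+1} = π_{K°}[v^j + α(H z^j − g)], z^{j+1} = π_D[z^j − α(P z^j + q + Hᵀ w^{j+1})], v^{j+1} = w^{j+1} + α H(z^{j+1} − z^j). Then for all j ≥ 3: (1/α)(z^{j−1} − z^j) − P z^{j−1} − q − Hᵀ w^j ∈ N_D(z^j) and (1/α)(w^{j−1} − w^j) + H(2z^{j−1} − z^{j−2}) − g ∈ N_{K°}(w^j). -/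
/-!
The residual `x - π_S[x]` is normal to `S` at `π_S[x]`, so a projected step
`p = π_S[x - α d]` gives `(1/α)(x - p) - d ∈ N_S(p)`. The primal update has this form with
`d = P z + q + Hᵀ w`. So does the dual update from the second iteration on: substituting the
previous update of `v` turns `v + α (H z - g)` into `w - α d`, where `d = g - H (2 z - z')` and
`z'` is the primal iterate before `z`.
-/

open scoped RealInnerProductSpace
open Filter Topology Metric ContinuousLinearMap

section NearestPoint

theorem norm_sub_eq_iInf_iff {E : Type*} [SeminormedAddCommGroup E] {S : Set E} {x y : E}
    (hy : y ∈ S) : ‖x - y‖ = ⨅ z : S, ‖x - z‖ ↔ ∀ z ∈ S, ‖x - y‖ ≤ ‖x - z‖ := by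
  have : Nonempty S := ⟨⟨y, hy⟩⟩
  have hbdd : BddBelow (Set.range fun z : S => ‖x - z‖) :=
    ⟨0, Set.forall_mem_range.2 fun _ => norm_nonneg _⟩
  have hle : ⨅ z : S, ‖x - z‖ ≤ ‖x - y‖ := ciInf_le hbdd ⟨y, hy⟩
  rw [← hle.ge_iff_eq', le_ciInf_iff hbdd, Subtype.forall]

variable {E : Type*} [NormedAddCommGroup E] [InnerProductSpace ℝ E] {S : Set E}

theorem sub_mem_normalCone_iff (hconv : Convex ℝ S) {x y : E} (hy : y ∈ S) :
    x - y ∈ normalCone S y ↔ ∀ z ∈ S, ‖x - y‖ ≤ ‖x - z‖ :=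
  (norm_eq_iInf_iff_real_inner_le_zero hconv hy).symm.trans (norm_sub_eq_iInf_iff hy)

theorem proj_mem_and_norm_sub_proj_le {x : E} (h : ∃ y, y ∈ S ∧ ∀ z ∈ S, ‖x - y‖ ≤ ‖x - z‖) :
    proj S x ∈ S ∧ ∀ z ∈ S, ‖x - proj S x‖ ≤ ‖x - z‖ := by
  rw [_root_.proj, dif_pos h]
  exact h.choose_spec

theorem sub_proj_mem_normalCone (hne : S.Nonempty) (hS : IsComplete S) (hconv : Convex ℝ S)
    (x : E) : x - proj S x ∈ normalCone S (proj S x) := by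
  obtain ⟨y, hyS, hy⟩ := exists_norm_eq_iInf_of_complete_convex hne hS hconv x
  obtain ⟨hmem, hmin⟩ := proj_mem_and_norm_sub_proj_le ⟨y, hyS, (norm_sub_eq_iInf_iff hyS).1 hy⟩
  exact (sub_mem_normalCone_iff hconv hmem).2 hmin

theorem smul_mem_normalCone {c : ℝ} (hc : 0 ≤ c) {x y : E} (hy : y ∈ normalCone S x) :
    c • y ∈ normalCone S x := fun z hz => by
  rw [real_inner_smul_left]
  exact mul_nonpos_of_nonneg_of_nonpos hc (hy z hz)

theorem one_div_smul_sub_sub_mem_normalCone_of_eq_proj (hne : S.Nonempty) (hS : IsComplete S)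
    (hconv : Convex ℝ S) {α : ℝ} (hα : 0 < α) {x d p : E} (hp : p = proj S (x - α • d)) :
    (1 / α) • (x - p) - d ∈ normalCone S p := by
  have hscale : (1 / α) • (x - p) - d = (1 / α) • (x - α • d - p) := by
    match_scalars <;> field_simp
  rw [hscale, hp]
  exact smul_mem_normalCone (one_div_nonneg.2 hα.le) (sub_proj_mem_normalCone hne hS hconv _)

end NearestPoint

section PolarCone

variable {E : Type*} [NormedAddCommGroup E] [InnerProductSpace ℝ E] (K : Set E)

theorem polarCone_nonempty : (polarCone K).Nonempty :=
  ⟨0, fun y _ => (inner_zero_left y).le⟩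

theorem polarCone_eq_biInter : polarCone K = ⋂ y ∈ K, {w : E | ⟪w, y⟫ ≤ 0} := by
  ext w
  simp only [polarCone, Set.mem_ofPred_eq, Set.mem_iInter]

theorem isClosed_polarCone : IsClosed (polarCone K) := by
  rw [polarCone_eq_biInter]
  exact isClosed_biInter fun y _ => isClosed_le (by fun_prop) continuous_const

theorem convex_polarCone : Convex ℝ (polarCone K) := by
  rw [polarCone_eq_biInter]
  exact convex_iInter₂ fun y _ => convex_halfSpace_le ((innerₗ E).flip y).isLinear 0

end PolarCone

theorem stmt14_general {E F : Type*} [NormedAddCommGroup E] [InnerProductSpace ℝ E]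
    [NormedAddCommGroup F] [InnerProductSpace ℝ F] {α : ℝ} (hα : 0 < α)
    (P : E → E) (q : E) (H : E →ₗ[ℝ] F) (A : F → E) (g : F)
    {D : Set E} (hDne : D.Nonempty) (hD : IsComplete D) (hDconv : Convex ℝ D)
    {C : Set F} (hCne : C.Nonempty) (hC : IsComplete C) (hCconv : Convex ℝ C)
    {w v : ℕ → F} {z : ℕ → E}
    (hw : ∀ j, w (j + 1) = proj C (v j + α • (H (z j) - g)))
    (hz : ∀ j, z (j + 1) = proj D (z j - α • (P (z j) + q + A (w (j + 1)))))
    (hv : ∀ j, v (j + 1) = w (j + 1) + α • H (z (j + 1) - z j)) :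
    (∀ j, (1 / α) • (z j - z (j + 1)) - P (z j) - q - A (w (j + 1)) ∈ normalCone D (z (j + 1))) ∧
      ∀ j, (1 / α) • (w (j + 1) - w (j + 2)) + H ((2 : ℝ) • z (j + 1) - z j) - g
        ∈ normalCone C (w (j + 2)) := by
  refine ⟨fun j => ?_, fun j => ?_⟩
  · simpa only [sub_sub, add_assoc] using
      one_div_smul_sub_sub_mem_normalCone_of_eq_proj hDne hD hDconv hα (hz j)
  · have hextrapolate : v (j + 1) + α • (H (z (j + 1)) - g) =
        w (j + 1) - α • (g - H ((2 : ℝ) • z (j + 1) - z j)) := by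
      rw [hv j, map_sub, map_sub, map_smul]
      module
    simpa only [sub_sub_eq_add_sub] using
      one_div_smul_sub_sub_mem_normalCone_of_eq_proj hCne hC hCconv hα
        ((hw (j + 1)).trans (congrArg (proj C) hextrapolate))

/-- normal-cone inclusions satisfied by the PIPG iterates. -/
theorem stmt14 {n m : ℕ} (α : ℝ) (hα0 : 0 < α)
    (P : EuclideanSpace ℝ (Fin n) →L[ℝ] EuclideanSpace ℝ (Fin n))
    (hPsa : IsSelfAdjoint P) (hPpsd : ∀ x, 0 ≤ ⟪P x, x⟫)
    (q : EuclideanSpace ℝ (Fin n))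
    (H : EuclideanSpace ℝ (Fin n) →L[ℝ] EuclideanSpace ℝ (Fin m))
    (g : EuclideanSpace ℝ (Fin m))
    (D : Set (EuclideanSpace ℝ (Fin n)))
    (hDne : D.Nonempty) (hDcl : IsClosed D) (hDconv : Convex ℝ D)
    (K : Set (EuclideanSpace ℝ (Fin m)))
    (hKne : K.Nonempty) (hKcl : IsClosed K) (hKconv : Convex ℝ K)
    (hKcone : ∀ w ∈ K, ∀ a : ℝ, 0 ≤ a → a • w ∈ K)
    (w v : ℕ → EuclideanSpace ℝ (Fin m))
    (z : ℕ → EuclideanSpace ℝ (Fin n))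
    (hw : ∀ j : ℕ, w (j + 1) = proj (polarCone K) (v j + α • (H (z j) - g)))
    (hz : ∀ j : ℕ, z (j + 1) =
      proj D (z j - α • (P (z j) + q + (ContinuousLinearMap.adjoint H) (w (j + 1)))))
    (hv : ∀ j : ℕ, v (j + 1) = w (j + 1) + α • H (z (j + 1) - z j))
    :
    ∀ j : ℕ, 3 ≤ j →
      ((1/α) • (z (j - 1) - z j) - P (z (j - 1)) - q
          - (ContinuousLinearMap.adjoint H) (w j)) ∈ normalCone D (z j) ∧
      ((1/α) • (w (j - 1) - w j) + H ((2 : ℝ) • z (j - 1) - z (j - 2)) - g)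
        ∈ normalCone (polarCone K) (w j) := by
  intro j hj
  obtain ⟨k, rfl⟩ := Nat.exists_eq_add_of_le' hj
  obtain ⟨hprimal, hdual⟩ := stmt14_general hα0 P q H.toLinearMap (⇑(adjoint H)) g
    hDne hDcl.isComplete hDconv
    (polarCone_nonempty K) (isClosed_polarCone K).isComplete (convex_polarCone K) hw hz hv
  exact ⟨hprimal (k + 2), hdual (k + 1)⟩
end
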